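/- Let Γ : ℝ × ℝ → L(X) be such that (t,s) ↦ Γ(t,s)x is continuous on {(t,s) : t ≠ s} for each x ∈ X, and suppose there exist M > 0 and ω > 0 with ‖Γ(t,s)‖_{L(X)} ≤ M·e^{−ω|t−s|} for all t, s ∈ ℝ. Suppose moreover that for every trigonometric polynomial P : ℝ → X the functions t ↦ ∫_{−∞}^{t} Γ(t,s) P(s) ds and t ↦ ∫_{t}^{+∞} Γ(t,s) P(s) ds are Bohr almost periodic. Let a > 0, α > 0, p ∈ [1,∞) with αp ≥ 1 and ap ≥ 1, and let f : ℝ → X be Lebesgue measurable, bounded, and belong to e-(x^α, t^{−a})-B^p(ℝ : X). Then the function u(t) := ∫_{−∞}^{+∞} Γ(t,s) f(s) ds is well-defined, bounded, continuous, and belongs to e-(x^α, t^{−a})-B^p(ℝ : X). -/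

import Mathlib

open MeasureTheory Filter Topology ENNReal NNReal

noncomputable section

/-- A trigonometric polynomial `P : ℝ → X`: a finite sum `P(t) = Σ_j e^{iλ_j t} c_j`. -/
def IsTrigPoly1 {X : Type*} [NormedAddCommGroup X] [NormedSpace ℂ X] (P : ℝ → X) : Prop :=
  ∃ (m : ℕ) (lam : Fin m → ℝ) (c : Fin m → X),
    ∀ t : ℝ, P t = ∑ j, Complex.exp (Complex.I * ((lam j * t : ℝ) : ℂ)) • c j

/-- Membership in the class `e-(x^α, t^{−a})-B^p(ℝ : X)`. -/
def MemBes1 {X : Type*} [NormedAddCommGroup X] [NormedSpace ℂ X]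
    (α a p : ℝ) (g : ℝ → X) : Prop :=
  ∃ P : ℕ → ℝ → X, (∀ k, IsTrigPoly1 (P k)) ∧
    Tendsto (fun k => limsup (fun t : ℝ =>
      ENNReal.ofReal (t ^ (-a)) *
        (∫⁻ s in Set.Icc (-t) t, ENNReal.ofReal (‖g s - P k s‖ ^ (α * p))) ^ (1 / p))
      atTop) atTop (𝓝 (0 : ℝ≥0∞))

/-- `g : ℝ → X` is Bohr almost periodic. -/
def BohrAP1 {X : Type*} [NormedAddCommGroup X] (g : ℝ → X) : Prop :=
  Continuous g ∧ ∀ ε : ℝ, 0 < ε → ∃ l : ℝ, 0 < l ∧ ∀ t₀ : ℝ,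
    ∃ τ ∈ Set.Icc t₀ (t₀ + l), ∀ t : ℝ, ‖g (t + τ) - g t‖ ≤ ε

set_option linter.unusedSectionVars false

theorem bes_common_eigen {V ι : Type*} [AddCommGroup V] [Module ℂ V] (L : ι → V →ₗ[ℂ] V)
    (hcomm : ∀ i j v, L i (L j v) = L j (L i v)) :
    ∀ (n : ℕ) (F : Submodule ℂ V), FiniteDimensional ℂ F → Module.finrank ℂ F = n → F ≠ ⊥ →
      (∀ i, ∀ v ∈ F, L i v ∈ F) → ∃ v ∈ F, v ≠ 0 ∧ ∀ i, ∃ c : ℂ, L i v = c • v := by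
  intro n
  induction n using Nat.strong_induction_on with
  | _ n ih =>
  intro F hfd hn hF hinv
  by_cases hs : ∀ i, ∃ c : ℂ, ∀ v ∈ F, L i v = c • v
  · obtain ⟨v, hv, hv0⟩ := Submodule.exists_mem_ne_zero_of_ne_bot hF
    exact ⟨v, hv, hv0, fun i => (hs i).imp fun c hc => hc v hv⟩
  · push Not at hs
    obtain ⟨i, hi⟩ := hs
    have : Nontrivial F := Submodule.nontrivial_iff_ne_bot.2 hF
    obtain ⟨c, hc⟩ := Module.End.exists_eigenvalue ((L i).restrict (hinv i))
    obtain ⟨w, hw⟩ := hc.exists_hasEigenvector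
    have hw1 : L i w = c • (w : V) := by
      have := congrArg Subtype.val hw.apply_eq_smul
      simpa using this
    set F' : Submodule ℂ V := F ⊓ LinearMap.ker (L i - c • LinearMap.id) with hF'
    have hmem : ∀ v, v ∈ F' ↔ v ∈ F ∧ L i v = c • v := by
      intro v; simp [hF', sub_eq_zero]
    have hle : F' ≤ F := inf_le_left
    have hlt : F' < F := by
      refine lt_of_le_of_ne hle fun h => ?_
      obtain ⟨v, hv, hv'⟩ := hi c
      rw [← h] at hv
      exact hv' ((hmem v).1 hv).2
    have hfd' : FiniteDimensional ℂ F' := Submodule.finiteDimensional_of_le hle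
    obtain ⟨v, hv, h⟩ := ih (Module.finrank ℂ F') (hn ▸ Submodule.finrank_lt_finrank_of_lt hlt) F' hfd' rfl
      (by
        intro hb
        have : (w : V) ∈ F' := (hmem _).2 ⟨w.2, hw1⟩
        rw [hb, Submodule.mem_bot] at this
        exact hw.2 (Subtype.ext this))
      (by
        intro j v hv
        rw [hmem] at hv ⊢
        refine ⟨hinv j v hv.1, ?_⟩
        rw [hcomm, hv.2, map_smul])
    exact ⟨v, hle hv, h⟩

section grp
variable {K : Type*} [NormedAddCommGroup K] [CompactSpace K]

def BesCh (χ : C(K, ℂ)) : Prop := (∀ x y, χ (x + y) = χ x * χ y) ∧ ∀ x, ‖χ x‖ = 1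

theorem bes_char_of_eigen (v : C(K, ℂ)) (hv : v ≠ 0)
    (h : ∀ y, ∃ c : ℂ, ∀ x, v (x + y) = c * v x) :
    v 0 ≠ 0 ∧ ∃ χ : C(K, ℂ), BesCh χ ∧ v = v 0 • χ := by
  choose c hc using h
  have h0 : v 0 ≠ 0 := by
    intro h0
    apply hv
    ext y
    have := hc y 0
    simpa [h0] using this
  have hcv : ∀ y, c y = (v 0)⁻¹ * v y := by
    intro y
    have := hc y 0
    rw [zero_add] at this
    rw [this]; field_simp
  refine ⟨h0, (v 0)⁻¹ • v, ⟨?_, ?_⟩, ?_⟩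
  · intro x y
    simp only [ContinuousMap.coe_smul, Pi.smul_apply, smul_eq_mul]
    rw [hc, hcv]; ring
  · have hmul : ∀ x y, c (x + y) = c x * c y := by
      intro x y
      rw [hcv (x+y), hc, hcv x, hcv y]; ring
    have hb : ∃ C, ∀ x, ‖c x‖ ≤ C := by
      refine ⟨‖(v 0)⁻¹‖ * ‖v‖, fun x => ?_⟩
      rw [hcv, norm_mul]
      gcongr
      exact v.norm_coe_le_norm x
    obtain ⟨C, hC⟩ := hb
    have hc0 : c 0 = 1 := by rw [hcv]; field_simp
    have hle : ∀ x, ‖c x‖ ≤ 1 := by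
      intro x
      by_contra hx
      push Not at hx
      have hpow : ∀ n : ℕ, c (n • x) = c x ^ n := by
        intro n
        induction n with
        | zero => simp [hc0]
        | succ n ih => rw [succ_nsmul, hmul, ih, pow_succ]
      obtain ⟨n, hn⟩ := pow_unbounded_of_one_lt C hx
      have := hC (n • x)
      rw [hpow, norm_pow] at this
      linarith
    intro x
    have h1 : c x * c (-x) = 1 := by rw [← hmul]; simp [hc0]
    have h2 : ‖c x‖ * ‖c (-x)‖ = 1 := by rw [← norm_mul, h1]; simp
    have h3 := hle x
    have h4 := hle (-x)
    have : ‖c x‖ = 1 := by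
      nlinarith [norm_nonneg (c x), norm_nonneg (c (-x))]
    simpa [hcv] using this
  · ext x
    simp [h0]

variable [MeasurableSpace K] [BorelSpace K] (μ : Measure K) [μ.IsAddHaarMeasure]

abbrev besJ : C(K, ℂ) →L[ℂ] Lp ℂ 2 μ := ContinuousMap.toLp 2 μ ℂ

def besKer (φ : C(K, ℂ)) : C(K, C(K, ℂ)) :=
  ContinuousMap.curry ⟨fun q : K × K => φ (q.1 - q.2), by fun_prop⟩

theorem besKer_apply (φ : C(K, ℂ)) (x y : K) : besKer φ x y = φ (x - y) := rfl

def besS (φ : C(K, ℂ)) : Lp ℂ 2 μ →ₗ[ℂ] C(K, ℂ) where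
  toFun f := ⟨fun x => inner ℂ (besJ μ (besKer φ x)) f, by fun_prop⟩
  map_add' f g := by ext x; simp [inner_add_right]
  map_smul' c f := by ext x; simp [inner_smul_right]

theorem besS_apply' (φ : C(K, ℂ)) (f : Lp ℂ 2 μ) (x : K) :
    besS μ φ f x = inner ℂ (besJ μ (besKer φ x)) f := rfl

theorem bes_inner_J (g : C(K, ℂ)) (f : Lp ℂ 2 μ) :
    inner ℂ (besJ μ g) f = ∫ y, f y * starRingEnd ℂ (g y) ∂μ := by
  rw [MeasureTheory.L2.inner_def]
  apply integral_congr_ae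
  filter_upwards [ContinuousMap.coeFn_toLp (p := 2) (𝕜 := ℂ) μ g] with y hy
  rw [hy]; rfl

theorem besS_apply (φ : C(K, ℂ)) (hφ : ∀ x, starRingEnd ℂ (φ x) = φ x) (f : Lp ℂ 2 μ) (x : K) :
    besS μ φ f x = ∫ y, f y * φ (x - y) ∂μ := by
  rw [besS_apply', bes_inner_J]
  simp [besKer_apply, hφ]

theorem besS_J (φ : C(K, ℂ)) (hφ : ∀ x, starRingEnd ℂ (φ x) = φ x) (g : C(K, ℂ)) (x : K) :
    besS μ φ (besJ μ g) x = ∫ y, g y * φ (x - y) ∂μ := by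
  rw [besS_apply μ φ hφ]
  apply integral_congr_ae
  filter_upwards [ContinuousMap.coeFn_toLp (p := 2) (𝕜 := ℂ) μ g] with y hy
  rw [hy]

/-- compactness of the image of the unit ball -/
theorem besS_compact (φ : C(K, ℂ)) : IsCompactOperator (besS μ φ) := by
  rw [isCompactOperator_iff_exists_mem_nhds_isCompact_closure_image]
  refine ⟨Metric.ball 0 1, Metric.ball_mem_nhds _ one_pos, ?_⟩

  let hiso := ContinuousMap.isometryEquivBoundedOfCompact K ℂ
  set A := (besS μ φ) '' Metric.ball 0 1
  obtain ⟨B, hB⟩ : ∃ B, ∀ x, ‖besJ μ (besKer φ x)‖ ≤ B := by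
    have hc : Continuous fun x => ‖besJ μ (besKer φ x)‖ := by fun_prop
    obtain ⟨B, hB⟩ := (isCompact_range hc).bddAbove
    exact ⟨B, fun x => hB ⟨x, rfl⟩⟩
  have key : IsCompact (closure (hiso '' A)) := by
    refine BoundedContinuousFunction.arzela_ascoli (Metric.closedBall (0:ℂ) B)
      (isCompact_closedBall _ _) _ ?_ ?_
    · rintro _ x ⟨_, ⟨f, hf, rfl⟩, rfl⟩
      change besS μ φ f x ∈ Metric.closedBall (0:ℂ) B
      rw [besS_apply', mem_closedBall_zero_iff]
      rw [mem_ball_zero_iff] at hf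
      calc _ ≤ ‖besJ μ (besKer φ x)‖ * ‖f‖ := norm_inner_le_norm _ _
        _ ≤ B * 1 := by gcongr; exact (norm_nonneg _).trans (hB x); exact hB x
        _ = B := mul_one _
    · intro x₀
      refine Metric.equicontinuousAt_of_continuity_modulus
        (fun x => ‖besJ μ (besKer φ x₀) - besJ μ (besKer φ x)‖) ?_ _ ?_
      · have : Continuous fun x => ‖besJ μ (besKer φ x₀) - besJ μ (besKer φ x)‖ := by fun_prop
        have h2 := this.tendsto x₀
        simpa using h2
      · refine Eventually.of_forall fun x => ?_
        rintro ⟨_, ⟨_, ⟨f, hf, rfl⟩, rfl⟩⟩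
        change dist (besS μ φ f x₀) (besS μ φ f x) ≤ _
        rw [mem_ball_zero_iff] at hf
        rw [besS_apply', besS_apply', dist_eq_norm, ← inner_sub_left]
        calc _ ≤ ‖besJ μ (besKer φ x₀) - besJ μ (besKer φ x)‖ * ‖f‖ := norm_inner_le_norm _ _
          _ ≤ ‖besJ μ (besKer φ x₀) - besJ μ (besKer φ x)‖ * 1 := by gcongr
          _ = _ := mul_one _
  have h2 : hiso '' closure A = closure (hiso '' A) := hiso.toHomeomorph.image_closure A
  rw [← h2] at key
  exact hiso.toHomeomorph.isCompact_image.1 key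

theorem besJS_compact (φ : C(K, ℂ)) : IsCompactOperator ((besJ μ).toLinearMap ∘ₗ besS μ φ) :=
  (besS_compact μ φ).clm_comp (besJ μ)

def besT (φ : C(K, ℂ)) : Lp ℂ 2 μ →L[ℂ] Lp ℂ 2 μ :=
  ContinuousLinearMap.mkOfIsCompactOperator (besJS_compact μ φ)

theorem besT_apply (φ : C(K, ℂ)) (f : Lp ℂ 2 μ) : besT μ φ f = besJ μ (besS μ φ f) := rfl

theorem besT_compact (φ : C(K, ℂ)) : IsCompactOperator (besT μ φ) := besJS_compact μ φ

theorem besT_symm (φ : C(K, ℂ)) (hφ : ∀ x, starRingEnd ℂ (φ x) = φ x) (hφ' : ∀ x, φ (-x) = φ x) :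
    (besT μ φ).IsSymmetric := by
  intro f g
  change inner ℂ (besT μ φ f) g = inner ℂ f (besT μ φ g)
  have : SecondCountableTopology K := inferInstance
  have hfi : Integrable f μ := (Lp.memLp f).integrable (by norm_num)
  have hgi : Integrable g μ := (Lp.memLp g).integrable (by norm_num)
  rw [← inner_conj_symm f, besT_apply, besT_apply, bes_inner_J, bes_inner_J, ← integral_conj]
  simp only [map_mul, Complex.conj_conj]
  simp_rw [besS_apply μ φ hφ, ← integral_conj, map_mul, hφ, ← integral_const_mul]
  have hintg : Integrable (Function.uncurry fun x y => g x * (starRingEnd ℂ (f y) * φ (x - y)))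
      (μ.prod μ) := by
    have h1 : Integrable (fun q : K × K => g q.1 * starRingEnd ℂ (f q.2)) (μ.prod μ) :=
      hgi.mul_prod (Complex.conjCLE.toContinuousLinearMap.integrable_comp hfi)
    have h2 := h1.mul_bdd (c := ‖φ‖) (g := fun q : K × K => φ (q.1 - q.2))
      (by exact Continuous.aestronglyMeasurable (by fun_prop))
      (Eventually.of_forall fun q => φ.norm_coe_le_norm _)
    refine h2.congr (Eventually.of_forall fun q => ?_)
    simp [Function.uncurry, mul_assoc]
  rw [integral_integral_swap hintg]
  congr 1; ext y; congr 1; ext x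
  rw [← hφ' (x - y), neg_sub]; ring

/-- characters are eigenvectors -/
theorem besS_char (φ : C(K, ℂ)) (hφ : ∀ x, starRingEnd ℂ (φ x) = φ x)
    (χ : C(K, ℂ)) (hχ : BesCh χ) : ∃ c : ℂ, besS μ φ (besJ μ χ) = c • χ := by
  refine ⟨∫ y, χ (-y) * φ y ∂μ, ?_⟩
  ext x
  rw [besS_J μ φ hφ]
  have : ∀ y, χ y * φ (x - y) = (fun z => χ (x - z) * φ z) (x - y) := by intro y; simp
  simp_rw [this]
  rw [integral_sub_left_eq_self (fun z => χ (x - z) * φ z) μ x]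
  simp only [ContinuousMap.coe_smul, Pi.smul_apply, smul_eq_mul]
  rw [← integral_mul_const]
  congr 1; ext z
  rw [sub_eq_add_neg, hχ.1]; ring

def besW : Submodule ℂ (Lp ℂ 2 μ) := Submodule.span ℂ ((besJ μ) '' {χ | BesCh χ})

theorem mem_besW_orth (f : Lp ℂ 2 μ) :
    f ∈ (besW μ)ᗮ ↔ ∀ χ, BesCh χ → inner ℂ (besJ μ χ) f = 0 := by
  constructor
  · intro h χ hχ
    exact (Submodule.mem_orthogonal _ _).1 h _ (Submodule.subset_span ⟨χ, hχ, rfl⟩)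
  · intro h
    rw [Submodule.mem_orthogonal]
    intro u hu
    induction hu using Submodule.span_induction with
    | mem x hx => obtain ⟨χ, hχ, rfl⟩ := hx; exact h χ hχ
    | zero => simp
    | add x y _ _ hx hy => rw [inner_add_left, hx, hy, add_zero]
    | smul a x _ hx => rw [inner_smul_left, hx, mul_zero]

theorem besT_orth (φ : C(K, ℂ)) (hφ : ∀ x, starRingEnd ℂ (φ x) = φ x) (hφ' : ∀ x, φ (-x) = φ x)
    (f : Lp ℂ 2 μ) (hf : f ∈ (besW μ)ᗮ) : besT μ φ f ∈ (besW μ)ᗮ := by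
  rw [mem_besW_orth] at hf ⊢
  intro χ hχ
  have := besT_symm μ φ hφ hφ' (besJ μ χ) f
  change inner ℂ (besT μ φ _) f = inner ℂ _ (besT μ φ f) at this
  rw [← this, besT_apply]
  obtain ⟨c, hc⟩ := besS_char μ φ hφ χ hχ
  rw [hc, map_smul, inner_smul_left, hf χ hχ, mul_zero]

/-- translation -/
def besL (y : K) : C(K, ℂ) →ₗ[ℂ] C(K, ℂ) where
  toFun v := ⟨fun x => v (x + y), by fun_prop⟩
  map_add' _ _ := rfl
  map_smul' _ _ := rfl

theorem besL_apply (y : K) (v : C(K, ℂ)) (x : K) : besL y v x = v (x + y) := rfl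

theorem besS_L (φ : C(K, ℂ)) (hφ : ∀ x, starRingEnd ℂ (φ x) = φ x) (v : C(K, ℂ)) (y : K) :
    besS μ φ (besJ μ (besL y v)) = besL y (besS μ φ (besJ μ v)) := by
  ext x
  rw [besL_apply, besS_J μ φ hφ, besS_J μ φ hφ]
  rw [← integral_add_right_eq_self (fun z => v z * φ (x + y - z)) y]
  congr 1; ext z
  rw [besL_apply]; congr 2; abel

theorem bes_inner_L (χ : C(K, ℂ)) (hχ : BesCh χ) (v : C(K, ℂ)) (y : K) :
    inner ℂ (besJ μ χ) (besJ μ (besL y v)) =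
      χ y * inner ℂ (besJ μ χ) (besJ μ v) := by
  have aux : ∀ w : C(K, ℂ), inner ℂ (besJ μ χ) (besJ μ w) = ∫ z, w z * starRingEnd ℂ (χ z) ∂μ := by
    intro w
    rw [bes_inner_J]
    apply integral_congr_ae
    filter_upwards [ContinuousMap.coeFn_toLp (p := 2) (𝕜 := ℂ) μ w] with z hz
    rw [hz]
  rw [aux, aux, ← integral_add_right_eq_self (fun z => v z * starRingEnd ℂ (χ z)) y,
    ← integral_const_mul]
  congr 1; ext z
  have h1 : χ y * starRingEnd ℂ (χ y) = 1 := by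
    rw [Complex.mul_conj, Complex.normSq_eq_norm_sq, hχ.2]; simp
  rw [besL_apply, hχ.1, map_mul]
  linear_combination (-v (z + y) * starRingEnd ℂ (χ z)) * h1

theorem besT_zero_on_orth (φ : C(K, ℂ)) (hφ : ∀ x, starRingEnd ℂ (φ x) = φ x)
    (hφ' : ∀ x, φ (-x) = φ x) (f : Lp ℂ 2 μ) (hf : f ∈ (besW μ)ᗮ) : besT μ φ f = 0 := by
  let TE : (besW μ)ᗮ →L[ℂ] (besW μ)ᗮ := (besT μ φ).restrict (besT_orth μ φ hφ hφ')
  have hc : IsCompactOperator TE := (besT_compact μ φ).restrict' (besT_orth μ φ hφ hφ')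
  have hs : TE.IsSymmetric := (besT_symm μ φ hφ hφ').restrict_invariant (besT_orth μ φ hφ hφ')
  have h0 : TE = 0 := by
    rw [← ContinuousLinearMap.eq_zero_of_forall_hasEigenvalue_eq_zero hc hs]
    intro c hcE
    by_contra hc0
    obtain ⟨w, hw⟩ := hcE.exists_hasEigenvector
    have hw1 : besT μ φ w = c • (w : Lp ℂ 2 μ) := congrArg Subtype.val hw.apply_eq_smul

    let F : Submodule ℂ C(K, ℂ) :=
      { carrier := {v | besS μ φ (besJ μ v) = c • v ∧ besJ μ v ∈ (besW μ)ᗮ}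
        add_mem' := by
          rintro u v ⟨hu, hu'⟩ ⟨hv, hv'⟩
          refine ⟨?_, ?_⟩
          · rw [map_add, map_add, hu, hv, smul_add]
          · rw [map_add]; exact Submodule.add_mem _ hu' hv'
        zero_mem' := by
          refine ⟨by simp, by simp⟩
        smul_mem' := by
          rintro a v ⟨hv, hv'⟩
          refine ⟨?_, ?_⟩
          · rw [map_smul, map_smul, hv, smul_comm]
          · rw [map_smul]; exact Submodule.smul_mem _ _ hv' }
    have hfd : FiniteDimensional ℂ F := by
      have := ContinuousLinearMap.finite_dimensional_eigenspace (besT_compact μ φ) c hc0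
      let e : F →ₗ[ℂ] Module.End.eigenspace (besT μ φ).toLinearMap c :=
        ((besJ μ).toLinearMap ∘ₗ F.subtype).codRestrict _ (by
          rintro ⟨v, hv, hv'⟩
          rw [Module.End.mem_eigenspace_iff]
          change besJ μ (besS μ φ (besJ μ v)) = c • besJ μ v
          rw [hv, map_smul])
      refine FiniteDimensional.of_injective e ?_
      intro u v huv
      have : besJ μ u = besJ μ v := congrArg Subtype.val huv
      exact Subtype.ext (ContinuousMap.toLp_injective μ this)
    have hJ : besJ μ (c⁻¹ • besS μ φ w) = w := by
      rw [map_smul, ← besT_apply, hw1, smul_smul, inv_mul_cancel₀ hc0, one_smul]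
    have hFne : F ≠ ⊥ := by
      intro hb
      have hm : c⁻¹ • besS μ φ (w : Lp ℂ 2 μ) ∈ F := by
        refine ⟨?_, ?_⟩
        · rw [hJ, smul_smul, mul_inv_cancel₀ hc0, one_smul]
        · rw [hJ]; exact w.2
      rw [hb, Submodule.mem_bot] at hm
      rw [hm, map_zero] at hJ
      exact hw.2 (Subtype.ext hJ.symm)
    obtain ⟨v, hvF, hv0, hv⟩ := bes_common_eigen (besL (K := K))
      (by intro i j v; ext x; simp only [besL_apply]; congr 1; abel)
      _ F hfd rfl hFne (by
        rintro y v ⟨hv, hv'⟩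
        refine ⟨?_, ?_⟩
        · rw [besS_L μ φ hφ, hv, map_smul]
        · rw [mem_besW_orth] at hv' ⊢
          intro χ hχ
          rw [bes_inner_L μ χ hχ, hv' χ hχ, mul_zero])
    obtain ⟨hv00, χ, hχ, hvχ⟩ := bes_char_of_eigen v hv0 (fun y => (hv y).imp fun c hc x => by
      have := congrArg (fun u : C(K, ℂ) => u x) hc
      simpa [besL_apply] using this)
    have h1 := (mem_besW_orth μ _).1 hvF.2 χ hχ
    rw [hvχ, map_smul, inner_smul_right, mul_eq_zero, inner_self_eq_zero] at h1
    rcases h1 with h1 | h1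
    · exact hv00 h1
    · have h2 : χ = 0 := ContinuousMap.toLp_injective (p := 2) (𝕜 := ℂ) μ (by rw [h1, map_zero])
      have := hχ.2 0
      rw [h2] at this
      simp at this
  have := congrArg (fun A => ((A ⟨f, hf⟩ : (besW μ)ᗮ) : Lp ℂ 2 μ)) h0
  exact this

theorem besT_mem_closure (φ : C(K, ℂ)) (hφ : ∀ x, starRingEnd ℂ (φ x) = φ x)
    (hφ' : ∀ x, φ (-x) = φ x) (g : Lp ℂ 2 μ) : besT μ φ g ∈ (besW μ).topologicalClosure := by
  rw [← Submodule.orthogonal_orthogonal_eq_closure, Submodule.mem_orthogonal]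
  intro u hu
  have := besT_symm μ φ hφ hφ' u g
  change inner ℂ (besT μ φ u) g = inner ℂ _ (besT μ φ g) at this
  rw [← this, besT_zero_on_orth μ φ hφ hφ' u hu, inner_zero_left]

end grp


section grp2
variable {K : Type*} [NormedAddCommGroup K] [CompactSpace K]
variable {X : Type*} [NormedAddCommGroup X] [NormedSpace ℂ X]

def besForm (K X : Type*) [NormedAddCommGroup K] [CompactSpace K]
    [NormedAddCommGroup X] [NormedSpace ℂ X] : Submodule ℂ (K → X) :=
  Submodule.span ℂ {H | ∃ (χ : C(K, ℂ)) (c : X), BesCh χ ∧ H = fun x => χ x • c}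

variable [MeasurableSpace K] [BorelSpace K] (μ : Measure K) [μ.IsAddHaarMeasure]

theorem bes_cont_integrable {Y : Type*} [NormedAddCommGroup Y] (h : K → Y) (hc : Continuous h) :
    Integrable h μ := by
  have : SecondCountableTopology K := inferInstance
  exact hc.integrable_of_hasCompactSupport (HasCompactSupport.of_compactSpace h)

theorem bes_form_conv [CompleteSpace X] (G : K → X) (hG : Continuous G) (Q : C(K, ℂ))
    (hQ : Q ∈ Submodule.span ℂ {χ : C(K, ℂ) | BesCh χ}) :
    (fun x => ∫ y, Q y • G (x + y) ∂μ) ∈ besForm K X := by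
  have hi : ∀ (Q : C(K, ℂ)) x, Integrable (fun y => Q y • G (x + y)) μ := fun Q x =>
    bes_cont_integrable μ _ (by fun_prop)
  induction hQ using Submodule.span_induction with
  | mem χ hχ =>
    apply Submodule.subset_span
    refine ⟨⟨fun x => χ (-x), by fun_prop⟩, ∫ y, χ y • G y ∂μ, ⟨?_, ?_⟩, ?_⟩
    · intro x y
      change χ (-(x + y)) = χ (-x) * χ (-y)
      rw [neg_add, hχ.1]
    · intro x; exact hχ.2 _
    · ext x
      change _ = χ (-x) • _
      rw [← integral_smul, ← integral_add_left_eq_self (fun y => χ (-x) • χ y • G y) x]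
      congr 1; ext y
      rw [smul_smul, ← hχ.1]; congr 2; abel
  | zero => 
    convert Submodule.zero_mem (besForm K X) using 1
    ext x; simp
  | add P Q _ _ hP hQ =>
    convert Submodule.add_mem _ hP hQ using 1
    ext x
    simp only [ContinuousMap.add_apply, add_smul, Pi.add_apply]
    rw [integral_add (hi P x) (hi Q x)]
  | smul a P _ hP =>
    convert Submodule.smul_mem _ a hP using 1
    ext x
    simp only [ContinuousMap.smul_apply, smul_assoc, Pi.smul_apply]
    rw [integral_smul]

theorem bes_L1_le (D : C(K, ℂ)) : ∫ y, ‖D y‖ ∂μ ≤ ‖besJ μ (1 : C(K, ℂ))‖ * ‖besJ μ D‖ := by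
  let A : C(K, ℂ) := ⟨fun y => (‖D y‖ : ℂ), by fun_prop⟩
  have h1 : inner ℂ (besJ μ (1 : C(K, ℂ))) (besJ μ A) = ((∫ y, ‖D y‖ ∂μ : ℝ) : ℂ) := by
    rw [bes_inner_J, ← integral_complex_ofReal]
    apply integral_congr_ae
    filter_upwards [ContinuousMap.coeFn_toLp (p := 2) (𝕜 := ℂ) μ A] with y hy
    rw [hy]; simp [A]
  have h2 : ‖besJ μ A‖ ≤ ‖besJ μ D‖ := by
    apply Lp.norm_le_norm_of_ae_le
    filter_upwards [ContinuousMap.coeFn_toLp (p := 2) (𝕜 := ℂ) μ A,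
      ContinuousMap.coeFn_toLp (p := 2) (𝕜 := ℂ) μ D] with y hy hy'
    rw [hy, hy']; simp [A]
  calc ∫ y, ‖D y‖ ∂μ ≤ ‖((∫ y, ‖D y‖ ∂μ : ℝ) : ℂ)‖ := by
        rw [Complex.norm_real]; exact le_abs_self _
    _ ≤ ‖besJ μ (1 : C(K, ℂ))‖ * ‖besJ μ A‖ := by rw [← h1]; exact norm_inner_le_norm _ _
    _ ≤ _ := by gcongr

theorem bes_partB [CompleteSpace X] (μ : Measure K) [μ.IsAddHaarMeasure] (G : K → X) (hG : LipschitzWith 1 G) (ε : ℝ) (hε : 0 < ε) :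
    ∃ H ∈ besForm K X, ∀ x, ‖G x - H x‖ ≤ ε := by
  have hGc := hG.continuous
  obtain ⟨B, hB⟩ : ∃ B, ∀ x, ‖G x‖ ≤ B := by
    obtain ⟨B, hB⟩ := (isCompact_range hGc.norm).bddAbove
    exact ⟨B, fun x => hB ⟨x, rfl⟩⟩
  have hB0 : 0 ≤ B := (norm_nonneg _).trans (hB 0)
  set δ := ε / 4 with hδ
  have hδ0 : 0 < δ := by positivity
  let φr : K → ℝ := fun x => max 0 (δ - ‖x‖)
  have hφc : Continuous φr := by fun_prop
  have hφ0 : ∀ x, 0 ≤ φr x := fun x => le_max_left _ _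
  have hφs : ∀ x, φr x ≠ 0 → ‖x‖ < δ := by
    intro x hx
    by_contra h
    push Not at h
    exact hx (max_eq_left (by linarith))
  let φ : C(K, ℂ) := ⟨fun x => (φr x : ℂ), by fun_prop⟩
  have hφ : ∀ x, starRingEnd ℂ (φ x) = φ x := fun x => Complex.conj_ofReal _
  have hφ' : ∀ x, φ (-x) = φ x := fun x => by simp [φ, φr]
  set ψ : C(K, ℂ) := besS μ φ (besJ μ φ) with hψ
  let ψr : K → ℝ := fun x => ∫ y, φr y * φr (x - y) ∂μ
  have hψr : ∀ x, ψ x = (ψr x : ℂ) := by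
    intro x
    rw [hψ, besS_J μ φ hφ, ← integral_complex_ofReal]
    simp [φ]
  have hψc : Continuous ψr := by
    have : ψr = fun x => (ψ x).re := by ext x; rw [hψr]; simp
    rw [this]; fun_prop
  have hψ0 : ∀ x, 0 ≤ ψr x := fun x => integral_nonneg fun y => mul_nonneg (hφ0 _) (hφ0 _)
  have hψs : ∀ x, 2 * δ ≤ ‖x‖ → ψr x = 0 := by
    intro x hx
    have : ∀ y, φr y * φr (x - y) = 0 := by
      intro y
      by_contra h
      have h1 := hφs _ (left_ne_zero_of_mul h)
      have h2 := hφs _ (right_ne_zero_of_mul h)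
      have h3 : ‖x‖ ≤ ‖y‖ + ‖x - y‖ := by
        have := norm_add_le y (x - y); simpa using this
      linarith
    simp [ψr, this]
  have hψpos : 0 < ψr 0 := by
    apply Continuous.integral_pos_of_hasCompactSupport_nonneg_nonzero (x := 0)
    · fun_prop
    · exact HasCompactSupport.of_compactSpace _
    · intro y; exact mul_nonneg (hφ0 _) (hφ0 _)
    · simp [φr, hδ0.ne', max_eq_right hδ0.le]
  set m := ∫ y, ψr y ∂μ with hm
  have hm0 : 0 < m := by
    apply Continuous.integral_pos_of_hasCompactSupport_nonneg_nonzero (x := 0) hψc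
    · exact HasCompactSupport.of_compactSpace _
    · exact hψ0
    · exact hψpos.ne'

  set η := ε * m / (4 * ((B + 1) * (‖besJ μ (1 : C(K, ℂ))‖ + 1))) with hη
  have hη0 : 0 < η := by positivity
  have hcl : besJ μ ψ ∈ (besW μ).topologicalClosure := besT_mem_closure μ φ hφ hφ' (besJ μ φ)
  obtain ⟨q, hq, hqd⟩ := Metric.mem_closure_iff.1 hcl η hη0
  have : ∃ Q ∈ Submodule.span ℂ {χ : C(K, ℂ) | BesCh χ}, besJ μ Q = q := by
    have hq' : q ∈ Submodule.span ℂ ((besJ μ).toLinearMap '' {χ : C(K, ℂ) | BesCh χ}) := hq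
    rw [Submodule.span_image] at hq'
    exact hq'
  obtain ⟨Q, hQ, rfl⟩ := this
  have hL1 : ∫ y, ‖(ψ - Q) y‖ ∂μ ≤ (‖besJ μ (1 : C(K, ℂ))‖ + 1) * η := by
    refine (bes_L1_le μ (ψ - Q)).trans ?_
    rw [map_sub, ← dist_eq_norm]
    gcongr
    linarith
  refine ⟨((m : ℂ)⁻¹) • fun x => ∫ y, Q y • G (x + y) ∂μ,
    Submodule.smul_mem _ _ (bes_form_conv μ G hGc Q hQ), fun x => ?_⟩
  have hmc : (m : ℂ) ≠ 0 := by exact_mod_cast hm0.ne'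
  have e1 : (m : ℂ) • G x = ∫ y, ψ y • G x ∂μ := by
    rw [integral_smul_const, hm, ← integral_complex_ofReal]
    simp [hψr]
  have hI1 : Integrable (fun y => ψ y • (G x - G (x + y))) μ :=
    bes_cont_integrable μ _ (by fun_prop)
  have hI2 : Integrable (fun y => (ψ - Q) y • G (x + y)) μ :=
    bes_cont_integrable μ _ (by fun_prop)
  have e2 : (m : ℂ) • G x - ∫ y, Q y • G (x + y) ∂μ =
      (∫ y, ψ y • (G x - G (x + y)) ∂μ) + ∫ y, (ψ - Q) y • G (x + y) ∂μ := by
    rw [e1, ← integral_add hI1 hI2, ← integral_sub]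
    · congr 1; ext y
      simp only [ContinuousMap.sub_apply, smul_sub, sub_smul]; abel
    · exact bes_cont_integrable μ _ (by fun_prop)
    · exact bes_cont_integrable μ _ (by fun_prop)
  have e3 : G x - ((m : ℂ)⁻¹) • ∫ y, Q y • G (x + y) ∂μ =
      (m : ℂ)⁻¹ • ((m : ℂ) • G x - ∫ y, Q y • G (x + y) ∂μ) := by
    rw [smul_sub, smul_smul, inv_mul_cancel₀ hmc, one_smul]
  have b1 : ‖∫ y, ψ y • (G x - G (x + y)) ∂μ‖ ≤ 2 * δ * m := by
    rw [hm, ← integral_const_mul]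
    refine norm_integral_le_of_norm_le (bes_cont_integrable μ _ (by fun_prop))
      (Eventually.of_forall fun y => ?_)
    rw [norm_smul, hψr, Complex.norm_real, Real.norm_of_nonneg (hψ0 y)]
    by_cases hy : 2 * δ ≤ ‖y‖
    · rw [hψs y hy]; simp
    · push Not at hy
      have := hG.dist_le_mul x (x + y)
      rw [dist_eq_norm] at this
      simp at this
      rw [mul_comm]
      exact mul_le_mul_of_nonneg_right (this.trans hy.le) (hψ0 y)
  have b2 : ‖∫ y, (ψ - Q) y • G (x + y) ∂μ‖ ≤ ε / 4 * m := by
    have : ‖∫ y, (ψ - Q) y • G (x + y) ∂μ‖ ≤ ∫ y, B * ‖(ψ - Q) y‖ ∂μ := by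
      refine norm_integral_le_of_norm_le (bes_cont_integrable μ _ (by fun_prop))
        (Eventually.of_forall fun y => ?_)
      rw [norm_smul, mul_comm]
      exact mul_le_mul_of_nonneg_right (hB _) (norm_nonneg _)
    refine this.trans ?_
    rw [integral_const_mul]
    calc B * ∫ y, ‖(ψ - Q) y‖ ∂μ ≤ (B + 1) * ((‖besJ μ (1 : C(K, ℂ))‖ + 1) * η) := by
          gcongr; linarith
      _ = ε / 4 * m := by rw [hη]; field_simp
  change ‖G x - ((m : ℂ)⁻¹) • ∫ y, Q y • G (x + y) ∂μ‖ ≤ ε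
  rw [e3, e2, norm_smul, norm_inv, Complex.norm_real, Real.norm_of_nonneg hm0.le,
    inv_mul_le_iff₀ hm0]
  refine (norm_add_le _ _).trans ?_
  have : 0 < ε * m := by positivity
  have := add_le_add b1 b2
  rw [hδ] at this
  linarith

end grp2


theorem bes_real_char (χ : ℝ → ℂ) (hc : Continuous χ) (hmul : ∀ x y, χ (x + y) = χ x * χ y)
    (hn : ∀ x, ‖χ x‖ = 1) : ∃ l : ℝ, ∀ t, χ t = Complex.exp (Complex.I * ((l * t : ℝ) : ℂ)) := by
  have h0 : χ 0 = 1 := by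
    have h := hmul 0 0
    have hne : χ 0 ≠ 0 := by
      intro h; have := hn 0; rw [h] at this; simp at this
    rw [add_zero] at h
    exact (mul_eq_left₀ hne).1 h.symm
  have hF : ∀ t, HasDerivAt (fun u => ∫ x in (0:ℝ)..u, χ x) (χ t) t := fun t =>
    intervalIntegral.integral_hasDerivAt_right (hc.intervalIntegrable _ _)
      (hc.stronglyMeasurableAtFilter _ _) hc.continuousAt
  obtain ⟨d, hd⟩ : ∃ d, (∫ x in (0:ℝ)..d, χ x) ≠ 0 := by
    by_contra h
    push Not at h
    have h1 := hF 0
    simp only [h] at h1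
    have := h1.unique (hasDerivAt_const 0 0)
    rw [h0] at this; exact one_ne_zero this
  set A := ∫ x in (0:ℝ)..d, χ x with hA
  have hχ : ∀ t, χ t = A⁻¹ * ((∫ x in (0:ℝ)..(t + d), χ x) - ∫ x in (0:ℝ)..t, χ x) := by
    intro t
    rw [intervalIntegral.integral_interval_sub_left (hc.intervalIntegrable _ _)
      (hc.intervalIntegrable _ _)]
    have : ∫ x in t..(t+d), χ x = χ t * A := by
      rw [hA, ← intervalIntegral.integral_const_mul]
      simp_rw [← hmul]
      rw [intervalIntegral.integral_comp_add_left]; simp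
    rw [this]; field_simp
  set c := A⁻¹ * (χ d - 1) with hcdef
  have hD : ∀ t, HasDerivAt χ (c * χ t) t := by
    intro t
    have h1 : HasDerivAt (fun t => A⁻¹ * ((∫ x in (0:ℝ)..(t + d), χ x) - ∫ x in (0:ℝ)..t, χ x))
        (A⁻¹ * (χ (t + d) - χ t)) t :=
      (((hF (t + d)).comp_add_const t d).sub (hF t)).const_mul _
    rw [← funext hχ] at h1
    convert h1 using 1
    rw [hmul, hcdef]; ring
  have hE : ∀ t : ℝ, HasDerivAt (fun t : ℝ => Complex.exp (-c * t)) (Complex.exp (-c * t) * (-c)) t := by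
    intro t
    have h1 : HasDerivAt (fun z : ℂ => Complex.exp (-c * z)) (Complex.exp (-c * t) * (-c * 1)) (t : ℂ) :=
      ((hasDerivAt_id (t : ℂ)).const_mul (-c)).cexp
    simpa using h1.comp_ofReal
  have hP : ∀ t, HasDerivAt (fun t : ℝ => χ t * Complex.exp (-c * t)) 0 t := by
    intro t
    have h1 := (hD t).mul (hE t)
    have h2 : c * χ t * Complex.exp (-c * t) + χ t * (Complex.exp (-c * t) * (-c)) = 0 := by ring
    rw [h2] at h1
    exact h1
  have hconst : ∀ t : ℝ, χ t * Complex.exp (-c * t) = 1 := by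
    intro t
    have := is_const_of_deriv_eq_zero (fun t => (hP t).differentiableAt) (fun t => (hP t).deriv) t 0
    simpa [h0] using this
  have hexp : ∀ t : ℝ, χ t = Complex.exp (c * t) := by
    intro t
    have h1 := hconst t
    have h2 : Complex.exp (-c * t) * Complex.exp (c * t) = 1 := by
      rw [← Complex.exp_add]; simp
    calc χ t = χ t * (Complex.exp (-c * t) * Complex.exp (c * t)) := by rw [h2, mul_one]
      _ = _ := by rw [← mul_assoc, h1, one_mul]
  have hre : c.re = 0 := by
    have h1 := hn 1
    rw [hexp, Complex.norm_exp] at h1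
    simpa using h1
  refine ⟨c.im, fun t => ?_⟩
  rw [hexp]
  congr 1
  apply Complex.ext <;> simp [hre]

section trig
variable {X : Type*} [NormedAddCommGroup X] [NormedSpace ℂ X]

theorem bes_trig_add {P Q : ℝ → X} (hP : IsTrigPoly1 P) (hQ : IsTrigPoly1 Q) :
    IsTrigPoly1 (fun t => P t + Q t) := by
  obtain ⟨m, l, c, h⟩ := hP
  obtain ⟨m', l', c', h'⟩ := hQ
  refine ⟨m + m', Fin.append l l', Fin.append c c', fun t => ?_⟩
  change P t + Q t = _
  rw [Fin.sum_univ_add, h, h']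
  simp

theorem bes_trig_smul {P : ℝ → X} (a : ℂ) (hP : IsTrigPoly1 P) :
    IsTrigPoly1 (fun t => a • P t) := by
  obtain ⟨m, l, c, h⟩ := hP
  refine ⟨m, l, fun j => a • c j, fun t => ?_⟩
  change a • P t = _
  rw [h, Finset.smul_sum]
  congr 1; ext j
  rw [smul_comm]

theorem bes_trig_continuous {P : ℝ → X} (hP : IsTrigPoly1 P) : Continuous P := by
  obtain ⟨m, l, c, h⟩ := hP
  rw [funext h]
  fun_prop

theorem bes_trig_bdd {P : ℝ → X} (hP : IsTrigPoly1 P) : ∃ C, ∀ t, ‖P t‖ ≤ C := by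
  obtain ⟨m, l, c, h⟩ := hP
  refine ⟨∑ j, ‖c j‖, fun t => ?_⟩
  rw [h]
  refine norm_sum_le_of_le _ fun j _ => ?_
  rw [norm_smul, mul_comm Complex.I, Complex.norm_exp_ofReal_mul_I, one_mul]

end trig

def BesR (N : AddGroupSeminorm ℝ) : Type := ℝ

instance besRInst (N : AddGroupSeminorm ℝ) : SeminormedAddCommGroup (BesR N) :=
  AddGroupSeminorm.toSeminormedAddCommGroup (E := ℝ) N

section bohr
variable {X : Type*} [NormedAddCommGroup X]

theorem bes_bohr_bdd {g : ℝ → X} (hg : BohrAP1 g) : ∃ C, ∀ t, ‖g t‖ ≤ C := by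
  obtain ⟨hc, h⟩ := hg
  obtain ⟨l, hl, h⟩ := h 1 one_pos
  obtain ⟨B, hB⟩ := (isCompact_Icc (a := (0:ℝ)) (b := l)).exists_bound_of_continuousOn hc.continuousOn
  refine ⟨B + 1, fun t => ?_⟩
  obtain ⟨τ, hτ, ht⟩ := h (-t)
  have h1 := hB (t + τ) ⟨by linarith [hτ.1], by linarith [hτ.2]⟩
  have h2 := ht t
  have h3 : ‖g t‖ ≤ ‖g (t + τ)‖ + ‖g (t + τ) - g t‖ := norm_le_norm_add_norm_sub _ _
  linarith

theorem bes_bohr_unif {g : ℝ → X} (hg : BohrAP1 g) (ε : ℝ) (hε : 0 < ε) :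
    ∃ d > 0, ∀ τ, |τ| < d → ∀ t, ‖g (t + τ) - g t‖ ≤ ε := by
  obtain ⟨hc, h⟩ := hg
  obtain ⟨l, hl, h⟩ := h (ε / 3) (by positivity)
  have hu := (isCompact_Icc (a := (-1:ℝ)) (b := l + 1)).uniformContinuousOn_of_continuous
    hc.continuousOn
  obtain ⟨d, hd, hu⟩ := Metric.uniformContinuousOn_iff.1 hu (ε / 3) (by positivity)
  refine ⟨min d 1, by positivity, fun τ hτ t => ?_⟩
  obtain ⟨σ, hσ, ht⟩ := h (-t)
  have hτ1 := abs_lt.1 (hτ.trans_le (min_le_right _ _))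
  have h1 := hu (t + σ + τ) ⟨by linarith [hσ.1], by linarith [hσ.2]⟩ (t + σ)
    ⟨by linarith [hσ.1], by linarith [hσ.2]⟩
    (by rw [Real.dist_eq]; simpa using hτ.trans_le (min_le_left _ _))
  rw [dist_eq_norm] at h1
  have h2 := ht t
  have h3 := ht (t + τ)
  rw [show t + τ + σ = t + σ + τ by ring] at h3
  calc ‖g (t + τ) - g t‖ = ‖-(g (t + σ + τ) - g (t + τ)) + (g (t + σ + τ) - g (t + σ))
        + (g (t + σ) - g t)‖ := by congr 1; abel
    _ ≤ ‖-(g (t + σ + τ) - g (t + τ))‖ + ‖g (t + σ + τ) - g (t + σ)‖ + ‖g (t + σ) - g t‖ :=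
        norm_add₃_le
    _ ≤ ε := by rw [norm_neg]; linarith

/-- the translation seminorm of a bounded function -/
def besN (g : ℝ → X) (hb : ∃ C, ∀ t, ‖g t‖ ≤ C) : AddGroupSeminorm ℝ where
  toFun τ := ⨆ t, ‖g (t + τ) - g t‖
  map_zero' := by simp
  add_le' τ σ := by
    obtain ⟨C, hC⟩ := hb
    have hbd : ∀ τ, BddAbove (Set.range fun t => ‖g (t + τ) - g t‖) := fun τ =>
      ⟨C + C, by rintro _ ⟨t, rfl⟩; exact norm_sub_le_of_le (hC _) (hC _)⟩
    refine ciSup_le fun t => ?_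
    have h1 := le_ciSup (hbd σ) (t + τ)
    have h2 := le_ciSup (hbd τ) t
    calc ‖g (t + (τ + σ)) - g t‖ ≤ ‖g (t + τ + σ) - g (t + τ)‖ + ‖g (t + τ) - g t‖ := by
          rw [← add_assoc]; exact norm_sub_le_norm_sub_add_norm_sub _ _ _
      _ ≤ _ := by linarith
  neg' τ := by
    have h := (Equiv.addRight τ).iSup_comp (g := fun t => ‖g (t + -τ) - g t‖)
    rw [← h]
    congr 1; ext t
    simp [norm_sub_rev]

theorem besN_ge (g : ℝ → X) (hb : ∃ C, ∀ t, ‖g t‖ ≤ C) (τ t : ℝ) :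
    ‖g (t + τ) - g t‖ ≤ besN g hb τ := by
  obtain ⟨C, hC⟩ := id hb
  exact le_ciSup (f := fun t => ‖g (t + τ) - g t‖)
    ⟨C + C, by rintro _ ⟨t, rfl⟩; exact norm_sub_le_of_le (hC _) (hC _)⟩ t

theorem besN_le (g : ℝ → X) (hb : ∃ C, ∀ t, ‖g t‖ ≤ C) (τ ε : ℝ)
    (h : ∀ t, ‖g (t + τ) - g t‖ ≤ ε) : besN g hb τ ≤ ε := ciSup_le h

/-- Bohr approximation theorem. -/
theorem bes_bohr_approx [NormedSpace ℂ X] [CompleteSpace X] {g : ℝ → X} (hg : BohrAP1 g)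
    (ε : ℝ) (hε : 0 < ε) :
    ∃ P, IsTrigPoly1 P ∧ ∀ t, ‖g t - P t‖ ≤ ε := by
  have hb := bes_bohr_bdd hg
  set N := besN g hb with hN
  let i : ℝ → BesR N := fun x => x
  have hi_add : ∀ x y, i (x + y) = i x + i y := fun _ _ => rfl
  have hi_dist : ∀ x y, dist (i x) (i y) = N (-x + y) := by
    intro x y
    rw [dist_eq_norm_neg_add]; rfl
  have hi_cont : Continuous i := by
    rw [Metric.continuous_iff]
    intro b η hη
    obtain ⟨d, hd, h⟩ := bes_bohr_unif hg (η / 2) (by positivity)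
    refine ⟨d, hd, fun a ha => ?_⟩
    rw [hi_dist]
    refine lt_of_le_of_lt (besN_le g hb _ (η / 2) (h _ ?_)) (by linarith)
    rw [Real.dist_eq] at ha
    rwa [neg_add_eq_sub, abs_sub_comm]
  have htb : TotallyBounded (Set.univ : Set (BesR N)) := by
    rw [Metric.totallyBounded_iff]
    intro η hη
    obtain ⟨l, hl, h⟩ := hg.2 (η / 2) (by positivity)
    have h1 := ((isCompact_Icc (a := (0:ℝ)) (b := l)).image hi_cont).totallyBounded
    obtain ⟨s, hs, hcov⟩ := Metric.totallyBounded_iff.1 h1 (η / 2) (by positivity)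
    refine ⟨s, hs, fun x _ => ?_⟩
    obtain ⟨x, rfl⟩ : ∃ x' : ℝ, i x' = x := ⟨x, rfl⟩
    obtain ⟨τ, hτ, ht⟩ := h (-x)
    have h2 := hcov ⟨x + τ, ⟨by linarith [hτ.1], by linarith [hτ.2]⟩, rfl⟩
    simp only [Set.mem_iUnion, Metric.mem_ball] at h2 ⊢
    obtain ⟨y, hy, hd⟩ := h2
    refine ⟨y, hy, ?_⟩
    have h3 : dist (i x) (i (x + τ)) ≤ η / 2 := by
      rw [hi_dist]
      refine besN_le g hb _ _ ?_
      simpa using ht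
    linarith [dist_triangle (i x) (i (x + τ)) y]
  let K := UniformSpace.Completion (BesR N)
  have hK : CompactSpace K := by
    have h1 := (htb.image (UniformSpace.Completion.uniformContinuous_coe (BesR N))).closure
    rw [Set.image_univ, UniformSpace.Completion.denseRange_coe.closure_range] at h1
    exact ⟨h1.isCompact_of_isClosed isClosed_univ⟩
  let g' : BesR N → X := g
  have hg' : LipschitzWith 1 g' := by
    refine LipschitzWith.of_dist_le_mul fun x y => ?_
    obtain ⟨x, rfl⟩ : ∃ x' : ℝ, i x' = x := ⟨x, rfl⟩
    obtain ⟨y, rfl⟩ : ∃ x' : ℝ, i x' = y := ⟨y, rfl⟩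
    rw [hi_dist, dist_comm, dist_eq_norm]
    have := besN_ge g hb (-x + y) x
    simpa using this
  let G : K → X := UniformSpace.Completion.extension g'
  have hG : LipschitzWith 1 G := hg'.completion_extension
  have hGi : ∀ t : ℝ, G ((i t : BesR N) : K) = g t := fun t =>
    UniformSpace.Completion.extension_coe hg'.uniformContinuous (i t)
  letI : MeasurableSpace K := borel K
  haveI : BorelSpace K := ⟨rfl⟩
  obtain ⟨H, hH, hHG⟩ := bes_partB (K := K) Measure.addHaar G hG ε hε
  refine ⟨fun t => H ((i t : BesR N) : K), ?_, fun t => ?_⟩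
  · clear hHG
    induction hH using Submodule.span_induction with
    | mem H hH =>
      obtain ⟨χ, c, hχ, rfl⟩ := hH
      obtain ⟨l, hl⟩ := bes_real_char (fun t => χ ((i t : BesR N) : K))
        (χ.continuous.comp ((UniformSpace.Completion.continuous_coe _).comp hi_cont))
        (fun x y => by rw [hi_add, UniformSpace.Completion.coe_add, hχ.1]) (fun x => hχ.2 _)
      exact ⟨1, fun _ => l, fun _ => c, fun t => by simp [hl]⟩
    | zero => exact ⟨0, fun _ => 0, fun _ => 0, fun t => by simp⟩
    | add P Q _ _ hP hQ => exact bes_trig_add hP hQ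
    | smul a P _ hP => exact bes_trig_smul a hP
  · rw [← hGi]; exact hHG _

end bohr


section D1
variable {X : Type*} [NormedAddCommGroup X] [NormedSpace ℂ X] [CompleteSpace X]

theorem bes_meas (Γ : ℝ → ℝ → X →L[ℂ] X)
    (hΓcont : ∀ x : X, ContinuousOn (fun q : ℝ × ℝ => Γ q.1 q.2 x) {q | q.1 ≠ q.2})
    (f : ℝ → X) (hf : StronglyMeasurable f) (t : ℝ) :
    AEStronglyMeasurable (fun s => Γ t s (f s)) volume := by
  have hconst : ∀ x : X, AEStronglyMeasurable (fun s => Γ t s x) volume := by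
    intro x
    have hc : ContinuousOn (fun s => Γ t s x) ({t}ᶜ : Set ℝ) := by
      have := (hΓcont x).comp (s := ({t}ᶜ : Set ℝ)) (f := fun s => ((t, s) : ℝ × ℝ))
        (by fun_prop) (by
          intro s hs
          simp only [Set.mem_compl_iff, Set.mem_singleton_iff] at hs
          exact fun h => hs h.symm)
      exact this
    have h1 := hc.aestronglyMeasurable (μ := volume) (measurableSet_singleton t).compl
    rwa [Measure.restrict_eq_self_of_ae_mem] at h1
    exact compl_mem_ae_iff.2 (by simp)
  have hsimple : ∀ g : SimpleFunc ℝ X, AEStronglyMeasurable (fun s => Γ t s (g s)) volume := by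
    intro g
    induction g using SimpleFunc.induction with
    | const c hs =>
      rename_i S
      have : (fun s => Γ t s ((SimpleFunc.piecewise S hs (SimpleFunc.const ℝ c)
          (SimpleFunc.const ℝ 0)) s)) = S.indicator (fun s => Γ t s c) := by
        ext s
        by_cases h : s ∈ S <;> simp [h]
      rw [this]
      exact (hconst c).indicator hs
    | add _ h1 h2 =>
      simp only [SimpleFunc.coe_add, Pi.add_apply, map_add]
      exact h1.add h2
  refine aestronglyMeasurable_of_tendsto_ae atTop (fun n => hsimple (hf.approx n)) ?_
  refine Eventually.of_forall fun s => ?_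
  exact ((Γ t s).continuous.tendsto _).comp (hf.tendsto_approx s)

theorem bes_exp_int (ω : ℝ) (hω : 0 < ω) (t : ℝ) :
    Integrable (fun s : ℝ => Real.exp (-ω * |t - s|)) := by
  have h0 : Integrable (fun s : ℝ => Real.exp (-ω * |s|)) := by
    rw [← integrableOn_univ, ← Set.Iic_union_Ioi (a := (0:ℝ)), integrableOn_union]
    constructor
    · refine (integrableOn_exp_mul_Iic hω 0).congr_fun (fun x hx => ?_) measurableSet_Iic
      simp only [Set.mem_Iic] at hx
      simp [abs_of_nonpos hx]
    · refine (integrableOn_exp_mul_Ioi (neg_lt_zero.2 hω) 0).congr_fun (fun x hx => ?_)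
        measurableSet_Ioi
      simp only [Set.mem_Ioi] at hx
      simp [abs_of_pos hx]
  exact h0.comp_sub_left t

/-- The exponential kernel. -/
def besE (ω s r : ℝ) : ℝ≥0∞ := ENNReal.ofReal (Real.exp (-ω * |s - r|))

theorem besE_meas (ω : ℝ) : Measurable (Function.uncurry (besE ω)) := by
  unfold besE Function.uncurry
  fun_prop

theorem besE_symm (ω s r : ℝ) : besE ω s r = besE ω r s := by
  unfold besE; rw [abs_sub_comm]

theorem besE_int (ω s : ℝ) : ∫⁻ r, besE ω s r = ∫⁻ r, besE ω 0 r := by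
  have h := lintegral_sub_left_eq_self (μ := (volume : Measure ℝ))
    (fun x => ENNReal.ofReal (Real.exp (-ω * |x|)))
  unfold besE
  rw [h s, h 0]

theorem besE_int2 (ω r : ℝ) : ∫⁻ s, besE ω s r = ∫⁻ r, besE ω 0 r := by
  simp_rw [besE_symm ω _ r]; exact besE_int ω r

theorem besE_fin (ω : ℝ) (hω : 0 < ω) : ∫⁻ r, besE ω 0 r ≠ ∞ := by
  have := (bes_exp_int ω hω 0).lintegral_lt_top
  exact this.ne

theorem besE_far (ω t s r : ℝ) (hs : s ∈ Set.Icc (-t) t) (hr : r ∉ Set.Icc (-t) t) :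
    besE ω s r ≤ (besE ω t s + besE ω (-t) s) * (besE ω t r + besE ω (-t) r) := by
  have key : besE ω s r = besE ω t s * besE ω t r ∨
      besE ω s r = besE ω (-t) s * besE ω (-t) r := by
    unfold besE
    simp_rw [← ENNReal.ofReal_mul (Real.exp_pos _).le, ← Real.exp_add]
    obtain ⟨h1, h2⟩ := hs
    by_cases h : t < r
    · left
      rw [abs_of_neg (by linarith : s - r < 0), abs_of_nonneg (by linarith : 0 ≤ t - s),
        abs_of_neg (by linarith : t - r < 0)]
      ring_nf
    · right
      have hr' : r < -t := by
        by_contra h'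
        exact hr ⟨by linarith, by linarith⟩
      rw [abs_of_pos (by linarith : 0 < s - r), abs_of_nonpos (by linarith : -t - s ≤ 0),
        abs_of_pos (by linarith : 0 < -t - r)]
      ring_nf
  rcases key with h | h <;> rw [h]
  · exact mul_le_mul' le_self_add le_self_add
  · exact mul_le_mul' le_add_self le_add_self

theorem bes_jensen (w g : ℝ → ℝ≥0∞) (hw : Measurable w) (hg : Measurable g) (q : ℝ) (hq : 1 ≤ q) :
    (∫⁻ r, w r * g r) ^ q ≤ (∫⁻ r, w r * g r ^ q) * (∫⁻ r, w r) ^ (q - 1) := by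
  have h := eLpNorm'_le_eLpNorm'_mul_rpow_measure_univ (μ := volume.withDensity w) (f := g)
    one_pos hq hg.aestronglyMeasurable
  have hq0 : 0 < q := by linarith
  have h1 := ENNReal.rpow_le_rpow h hq0.le
  rw [ENNReal.mul_rpow_of_nonneg _ _ hq0.le, ← ENNReal.rpow_mul] at h1
  unfold eLpNorm' at h1
  simp only [enorm_eq_self, ENNReal.rpow_one, one_div, inv_one] at h1
  rw [← ENNReal.rpow_mul, inv_mul_cancel₀ hq0.ne', ENNReal.rpow_one,
    lintegral_withDensity_eq_lintegral_mul _ hw hg,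
    lintegral_withDensity_eq_lintegral_mul _ hw (hg.pow_const q), withDensity_apply _ .univ,
    Measure.restrict_univ, sub_mul, inv_mul_cancel₀ hq0.ne', one_mul] at h1
  exact h1

theorem bes_tonelli (ω : ℝ) (H : ℝ → ℝ≥0∞) (hH : Measurable H) (K : ℝ≥0∞) (hK : ∀ r, H r ≤ K)
    (t : ℝ) :
    ∫⁻ s in Set.Icc (-t) t, ∫⁻ r, besE ω s r * H r ≤
      (∫⁻ r, besE ω 0 r) * (∫⁻ r in Set.Icc (-t) t, H r)
        + K * (2 * ∫⁻ r, besE ω 0 r) ^ 2 := by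
  set c := ∫⁻ r, besE ω 0 r with hc
  have hE1 : ∀ r, Measurable fun s => besE ω s r := fun r =>
    (besE_meas ω).comp (measurable_id.prodMk measurable_const)
  have hE2 : ∀ s, Measurable fun r => besE ω s r := fun s =>
    (besE_meas ω).comp (measurable_const.prodMk measurable_id)
  set F : ℝ → ℝ≥0∞ := fun r => besE ω t r + besE ω (-t) r with hF
  have hFm : Measurable F := (hE2 t).add (hE2 (-t))
  have hFi : ∫⁻ r, F r = 2 * c := by
    rw [hF, lintegral_add_left (hE2 t), besE_int ω t, besE_int ω (-t), two_mul]
  rw [lintegral_lintegral_swap]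
  · have hpt : ∀ r, ∫⁻ s in Set.Icc (-t) t, besE ω s r * H r ≤
        (Set.Icc (-t) t).indicator (fun r => c * H r) r + K * (2 * c) * F r := by
      intro r
      rw [lintegral_mul_const _ (hE1 r)]
      by_cases hr : r ∈ Set.Icc (-t) t
      · rw [Set.indicator_of_mem hr]
        refine le_trans (mul_le_mul_left ?_ _) le_self_add
        rw [hc, ← besE_int2 ω r]
        exact setLIntegral_le_lintegral _ _
      · refine le_trans ?_ le_add_self
        calc (∫⁻ s in Set.Icc (-t) t, besE ω s r) * H r
            ≤ (∫⁻ s in Set.Icc (-t) t, F s * F r) * K := by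
              refine mul_le_mul' (setLIntegral_mono' measurableSet_Icc fun s hs => ?_) (hK r)
              exact besE_far ω t s r hs hr
          _ ≤ (∫⁻ s, F s * F r) * K := by gcongr; exact Measure.restrict_le_self
          _ = K * (2 * c) * F r := by
              rw [lintegral_mul_const _ hFm, hFi]; ring
    refine (lintegral_mono hpt).trans ?_
    rw [lintegral_add_right _ (hFm.const_mul _), lintegral_indicator measurableSet_Icc,
      lintegral_const_mul _ hH, lintegral_const_mul _ hFm, hFi]
    apply le_of_eq; ring
  · exact ((besE_meas ω).mul (hH.comp measurable_snd)).aemeasurable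

end D1


section D2
variable {X : Type*} [NormedAddCommGroup X] [NormedSpace ℂ X] [CompleteSpace X]

theorem bes_pt (Γ : ℝ → ℝ → X →L[ℂ] X) (M ω : ℝ)
    (hΓ : ∀ t s : ℝ, ‖Γ t s‖ ≤ M * Real.exp (-ω * |t - s|)) (x : X) (t s : ℝ) :
    ‖Γ t s x‖ ≤ M * Real.exp (-ω * |t - s|) * ‖x‖ :=
  (ContinuousLinearMap.le_opNorm _ _).trans (by gcongr; exact hΓ t s)

theorem bes_int (Γ : ℝ → ℝ → X →L[ℂ] X)
    (hΓcont : ∀ x : X, ContinuousOn (fun q : ℝ × ℝ => Γ q.1 q.2 x) {q | q.1 ≠ q.2})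
    (M ω : ℝ) (hM : 0 < M) (hω : 0 < ω)
    (hΓ : ∀ t s : ℝ, ‖Γ t s‖ ≤ M * Real.exp (-ω * |t - s|))
    (f : ℝ → X) (hf : StronglyMeasurable f) (C : ℝ) (hC : ∀ t, ‖f t‖ ≤ C) (t : ℝ) :
    Integrable (fun s => Γ t s (f s)) := by
  refine Integrable.mono' (((bes_exp_int ω hω t).const_mul M).mul_const C)
    (bes_meas Γ hΓcont f hf t) (Eventually.of_forall fun s => ?_)
  exact (bes_pt Γ M ω hΓ _ _ _).trans (by gcongr; exact hC s)

theorem bes_bdd (Γ : ℝ → ℝ → X →L[ℂ] X)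
    (M ω : ℝ) (hM : 0 < M) (hω : 0 < ω)
    (hΓ : ∀ t s : ℝ, ‖Γ t s‖ ≤ M * Real.exp (-ω * |t - s|))
    (f : ℝ → X) (C : ℝ) (hC : ∀ t, ‖f t‖ ≤ C) (t : ℝ) :
    ‖∫ s, Γ t s (f s)‖ ≤ ∫ s, M * Real.exp (-ω * |s|) * C := by
  refine (norm_integral_le_of_norm_le (((bes_exp_int ω hω t).const_mul M).mul_const C)
    (Eventually.of_forall fun s => (bes_pt Γ M ω hΓ _ _ _).trans (by gcongr; exact hC s))).trans
    (le_of_eq ?_)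
  exact integral_sub_left_eq_self (fun x => M * Real.exp (-ω * |x|) * C) volume t

theorem bes_cont (Γ : ℝ → ℝ → X →L[ℂ] X)
    (hΓcont : ∀ x : X, ContinuousOn (fun q : ℝ × ℝ => Γ q.1 q.2 x) {q | q.1 ≠ q.2})
    (M ω : ℝ) (hM : 0 < M) (hω : 0 < ω)
    (hΓ : ∀ t s : ℝ, ‖Γ t s‖ ≤ M * Real.exp (-ω * |t - s|))
    (f : ℝ → X) (hf : StronglyMeasurable f) (C : ℝ) (hC : ∀ t, ‖f t‖ ≤ C) :
    Continuous (fun t => ∫ s, Γ t s (f s)) := by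
  rw [continuous_iff_continuousAt]
  intro t0
  refine continuousAt_of_dominated
    (bound := fun s => M * (Real.exp ω * Real.exp (-ω * |t0 - s|)) * C)
    (Eventually.of_forall fun t => bes_meas Γ hΓcont f hf t) ?_
    ((((bes_exp_int ω hω t0).const_mul _).const_mul M).mul_const C) ?_
  · filter_upwards [Metric.ball_mem_nhds t0 one_pos] with t ht
    refine Eventually.of_forall fun s => (bes_pt Γ M ω hΓ _ _ _).trans ?_
    rw [← Real.exp_add]
    have h1 : |t0 - s| ≤ |t - s| + 1 := by
      rw [Metric.mem_ball, Real.dist_eq, abs_sub_comm] at ht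
      have := abs_sub_le t0 t s
      linarith
    gcongr
    · nlinarith
    · exact hC s
  · have : ({t0}ᶜ : Set ℝ) ∈ ae (volume : Measure ℝ) := compl_mem_ae_iff.2 (by simp)
    filter_upwards [this] with s hs
    have hne : t0 ≠ s := fun h => hs h.symm
    have h1 : ContinuousAt (fun q : ℝ × ℝ => Γ q.1 q.2 (f s)) (t0, s) :=
      (hΓcont (f s)).continuousAt
        ((isOpen_ne_fun continuous_fst continuous_snd).mem_nhds hne)
    exact h1.comp (f := fun t : ℝ => ((t, s) : ℝ × ℝ)) (by fun_prop)

theorem bes_split (Γ : ℝ → ℝ → X →L[ℂ] X)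
    (hΓcont : ∀ x : X, ContinuousOn (fun q : ℝ × ℝ => Γ q.1 q.2 x) {q | q.1 ≠ q.2})
    (M ω : ℝ) (hM : 0 < M) (hω : 0 < ω)
    (hΓ : ∀ t s : ℝ, ‖Γ t s‖ ≤ M * Real.exp (-ω * |t - s|))
    (hBohr : ∀ P : ℝ → X, IsTrigPoly1 P →
      BohrAP1 (fun t : ℝ => ∫ s in Set.Iio t, Γ t s (P s)) ∧
      BohrAP1 (fun t : ℝ => ∫ s in Set.Ioi t, Γ t s (P s)))
    (P : ℝ → X) (hP : IsTrigPoly1 P) (hPm : StronglyMeasurable P) (δ : ℝ) (hδ : 0 < δ) :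
    ∃ Q, IsTrigPoly1 Q ∧ ∀ t, ‖(∫ s, Γ t s (P s)) - Q t‖ ≤ δ := by
  obtain ⟨C, hC⟩ := bes_trig_bdd hP
  obtain ⟨h1, h2⟩ := hBohr P hP
  obtain ⟨Q1, hQ1, hb1⟩ := bes_bohr_approx h1 (δ / 2) (by positivity)
  obtain ⟨Q2, hQ2, hb2⟩ := bes_bohr_approx h2 (δ / 2) (by positivity)
  refine ⟨_, bes_trig_add hQ1 hQ2, fun t => ?_⟩
  have hi := bes_int Γ hΓcont M ω hM hω hΓ P hPm C hC t
  rw [← intervalIntegral.integral_Iic_add_Ioi (b := t) hi.integrableOn hi.integrableOn,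
    integral_Iic_eq_integral_Iio]
  calc _ = ‖((∫ s in Set.Iio t, Γ t s (P s)) - Q1 t) + ((∫ s in Set.Ioi t, Γ t s (P s)) - Q2 t)‖ := by
        congr 1
        try simp only [Pi.add_apply]
        abel
    _ ≤ δ / 2 + δ / 2 := (norm_add_le _ _).trans (add_le_add (hb1 t) (hb2 t))
    _ = δ := by ring

theorem bes_core (Γ : ℝ → ℝ → X →L[ℂ] X)
    (M ω : ℝ) (hM : 0 < M) (hω : 0 < ω)
    (hΓ : ∀ t s : ℝ, ‖Γ t s‖ ≤ M * Real.exp (-ω * |t - s|))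
    (q : ℝ) (hq : 1 ≤ q) :
    ∃ A : ℝ≥0∞, A ≠ ∞ ∧ ∀ h : ℝ → X, StronglyMeasurable h → ∀ B : ℝ, (∀ t, ‖h t‖ ≤ B) →
      ∃ D : ℝ≥0∞, D ≠ ∞ ∧ ∀ t : ℝ,
        ∫⁻ s in Set.Icc (-t) t, ‖∫ r, Γ s r (h r)‖ₑ ^ q ≤
          A * (∫⁻ s in Set.Icc (-t) t, ‖h s‖ₑ ^ q) + D := by
  set c := ∫⁻ r, besE ω 0 r with hc
  have hcf : c ≠ ∞ := besE_fin ω hω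
  have hq0 : 0 < q := by linarith
  set L : ℝ≥0∞ := ENNReal.ofReal M ^ q * c ^ (q - 1) with hL
  have hLf : L ≠ ∞ := ENNReal.mul_ne_top (ENNReal.rpow_ne_top_of_nonneg hq0.le ENNReal.ofReal_ne_top)
    (ENNReal.rpow_ne_top_of_nonneg (by linarith) hcf)
  refine ⟨L * c, ENNReal.mul_ne_top hLf hcf, fun h hh B hB => ?_⟩
  set K : ℝ≥0∞ := ENNReal.ofReal B ^ q with hKd
  have hKf : K ≠ ∞ := ENNReal.rpow_ne_top_of_nonneg hq0.le ENNReal.ofReal_ne_top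
  refine ⟨L * (K * (2 * c) ^ 2), ?_, fun t => ?_⟩
  · exact ENNReal.mul_ne_top hLf (ENNReal.mul_ne_top hKf (ENNReal.pow_ne_top
      (ENNReal.mul_ne_top (by simp) hcf)))
  have hE2 : ∀ s, Measurable fun r => besE ω s r := fun s =>
    (besE_meas ω).comp (measurable_const.prodMk measurable_id)
  have hhm : Measurable fun r => ‖h r‖ₑ := hh.enorm
  have hpt : ∀ s, ‖∫ r, Γ s r (h r)‖ₑ ^ q ≤ L * ∫⁻ r, besE ω s r * ‖h r‖ₑ ^ q := by
    intro s
    have h1 : ‖∫ r, Γ s r (h r)‖ₑ ≤ ENNReal.ofReal M * ∫⁻ r, besE ω s r * ‖h r‖ₑ := by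
      refine (enorm_integral_le_lintegral_enorm _).trans ?_
      rw [← lintegral_const_mul' _ _ ENNReal.ofReal_ne_top]
      refine lintegral_mono fun r => ?_
      unfold besE
      rw [← ofReal_norm, ← ofReal_norm, ← ENNReal.ofReal_mul (Real.exp_pos _).le,
        ← ENNReal.ofReal_mul hM.le, ← mul_assoc]
      exact ENNReal.ofReal_le_ofReal (bes_pt Γ M ω hΓ _ _ _)
    refine (ENNReal.rpow_le_rpow h1 hq0.le).trans ?_
    rw [ENNReal.mul_rpow_of_nonneg _ _ hq0.le]
    refine (mul_le_mul_right (bes_jensen _ _ (hE2 s) hhm q hq) _).trans (le_of_eq ?_)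
    rw [besE_int ω s, ← hc, hL]; ring
  refine (lintegral_mono hpt).trans ?_
  rw [lintegral_const_mul' _ _ hLf]
  refine (mul_le_mul_right (bes_tonelli ω _ (hhm.pow_const q) K (fun r => ?_) t) _).trans
    (le_of_eq ?_)
  · refine ENNReal.rpow_le_rpow ?_ hq0.le
    rw [← ofReal_norm]; exact ENNReal.ofReal_le_ofReal (hB r)
  · rw [← hc]; ring

end D2


section D3
variable {X : Type*} [NormedAddCommGroup X] [NormedSpace ℂ X] [CompleteSpace X]

theorem bes_lim (a p : ℝ) (hp : 1 ≤ p) (hap : 1 ≤ a * p)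
    (A S D d I : ℝ≥0∞) (t : ℝ) (ht : 1 ≤ t) (H : ℝ≥0∞)
    (hI : I ≤ S * (A * H + D) + ENNReal.ofReal t * d) (hD : S * D ≤ ENNReal.ofReal t * d) :
    ENNReal.ofReal (t ^ (-a)) * I ^ (1 / p) ≤
      (S * A) ^ (1 / p) * (ENNReal.ofReal (t ^ (-a)) * H ^ (1 / p)) + (2 * d) ^ (1 / p) := by
  have hp0 : 0 < p := by linarith
  have hp1 : 0 ≤ 1 / p := by positivity
  have hI2 : I ≤ S * A * H + ENNReal.ofReal t * (2 * d) := by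
    calc I ≤ S * (A * H + D) + ENNReal.ofReal t * d := hI
      _ = S * A * H + (S * D + ENNReal.ofReal t * d) := by ring
      _ ≤ S * A * H + (ENNReal.ofReal t * d + ENNReal.ofReal t * d) := by gcongr
      _ = _ := by ring
  have hI3 : I ^ (1 / p) ≤ (S * A) ^ (1 / p) * H ^ (1 / p)
      + ENNReal.ofReal t ^ (1 / p) * (2 * d) ^ (1 / p) := by
    refine (ENNReal.rpow_le_rpow hI2 hp1).trans ?_
    refine (ENNReal.rpow_add_le_add_rpow _ _ hp1 ?_).trans ?_
    · rw [div_le_one hp0]; exact hp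
    · rw [ENNReal.mul_rpow_of_nonneg (S * A) H hp1,
        ENNReal.mul_rpow_of_nonneg (ENNReal.ofReal t) (2 * d) hp1]
  have ht1 : ENNReal.ofReal (t ^ (-a)) * ENNReal.ofReal t ^ (1 / p) ≤ 1 := by
    rw [ENNReal.ofReal_rpow_of_nonneg (by linarith) hp1,
      ← ENNReal.ofReal_mul (by positivity), ← Real.rpow_add (by linarith)]
    rw [ENNReal.ofReal_le_one]
    refine Real.rpow_le_one_of_one_le_of_nonpos ht ?_
    have : 1 / p ≤ a := by rw [div_le_iff₀ hp0]; exact hap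
    linarith
  calc _ ≤ ENNReal.ofReal (t ^ (-a)) * ((S * A) ^ (1 / p) * H ^ (1 / p)
      + ENNReal.ofReal t ^ (1 / p) * (2 * d) ^ (1 / p)) := by gcongr
    _ = (S * A) ^ (1 / p) * (ENNReal.ofReal (t ^ (-a)) * H ^ (1 / p)) +
        (ENNReal.ofReal (t ^ (-a)) * ENNReal.ofReal t ^ (1 / p)) * (2 * d) ^ (1 / p) := by ring
    _ ≤ _ := by
      gcongr
      exact mul_le_of_le_one_left' ht1

theorem bes_mem (Γ : ℝ → ℝ → X →L[ℂ] X)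
    (hΓcont : ∀ x : X, ContinuousOn (fun q : ℝ × ℝ => Γ q.1 q.2 x) {q | q.1 ≠ q.2})
    (M ω : ℝ) (hM : 0 < M) (hω : 0 < ω)
    (hΓ : ∀ t s : ℝ, ‖Γ t s‖ ≤ M * Real.exp (-ω * |t - s|))
    (hBohr : ∀ P : ℝ → X, IsTrigPoly1 P →
      BohrAP1 (fun t : ℝ => ∫ s in Set.Iio t, Γ t s (P s)) ∧
      BohrAP1 (fun t : ℝ => ∫ s in Set.Ioi t, Γ t s (P s)))
    (a α p : ℝ) (hp : 1 ≤ p)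
    (hαp : 1 ≤ α * p) (hap : 1 ≤ a * p)
    (f : ℝ → X) (hfmeas : StronglyMeasurable f)
    (C : ℝ) (hC : ∀ t : ℝ, ‖f t‖ ≤ C)
    (hf : MemBes1 α a p f) :
    MemBes1 α a p (fun t : ℝ => ∫ s : ℝ, Γ t s (f s)) := by
  obtain ⟨P, hP, hlim⟩ := hf
  set q := α * p with hq
  have hq0 : 0 < q := by linarith
  have hp0 : 0 < p := by linarith
  have hp1 : 0 < 1 / p := by positivity
  have hPm : ∀ k, StronglyMeasurable (P k) := fun k => (bes_trig_continuous (hP k)).stronglyMeasurable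
  have hQ := fun k : ℕ => bes_split Γ hΓcont M ω hM hω hΓ hBohr (P k) (hP k) (hPm k)
    (1 / ((k : ℝ) + 1)) Nat.one_div_pos_of_nat
  choose Q hQt hQb using hQ
  obtain ⟨A, hA, hcore⟩ := bes_core Γ M ω hM hω hΓ q hαp
  set S : ℝ≥0∞ := 2 ^ (q - 1) with hS
  have hSf : S ≠ ∞ := ENNReal.rpow_ne_top_of_nonneg (by linarith) (by simp)
  have hen : ∀ x : X, ENNReal.ofReal (‖x‖ ^ q) = ‖x‖ₑ ^ q := by
    intro x
    rw [← ofReal_norm, ENNReal.ofReal_rpow_of_nonneg (norm_nonneg _) hq0.le]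
  set e : ℕ → ℝ≥0∞ := fun k => ENNReal.ofReal (1 / ((k : ℝ) + 1)) with he
  have he0 : ∀ k, 0 < e k := fun k => ENNReal.ofReal_pos.2 Nat.one_div_pos_of_nat
  set d : ℕ → ℝ≥0∞ := fun k => S * (2 * e k ^ q) with hd
  have hd0 : ∀ k, d k ≠ 0 := by
    intro k
    have h1 : S ≠ 0 := (ENNReal.rpow_pos (by simp) (by simp)).ne'
    have h2 : e k ^ q ≠ 0 := (ENNReal.rpow_pos (he0 k) ENNReal.ofReal_ne_top).ne'
    simp [hd, h1, h2]
  have hlime : Tendsto e atTop (𝓝 0) := by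
    rw [← ENNReal.ofReal_zero]
    exact ENNReal.tendsto_ofReal tendsto_one_div_add_atTop_nhds_zero_nat
  have hlimd : Tendsto (fun k => (2 * d k) ^ (1 / p)) atTop (𝓝 0) := by
    have h1 : Tendsto (fun k => e k ^ q) atTop (𝓝 0) := by
      have := hlime.ennrpow_const q
      rwa [ENNReal.zero_rpow_of_pos hq0] at this
    have h2 : Tendsto (fun k => 2 * d k) atTop (𝓝 (2 * (S * (2 * 0)))) :=
      ENNReal.Tendsto.const_mul (ENNReal.Tendsto.const_mul (ENNReal.Tendsto.const_mul h1
        (Or.inr (by simp))) (Or.inr hSf)) (Or.inr (by simp))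
    have h3 := h2.ennrpow_const (1 / p)
    simp only [mul_zero] at h3
    rwa [ENNReal.zero_rpow_of_pos hp1] at h3
  refine ⟨Q, hQt, ?_⟩
  have hSA : (S * A) ^ (1 / p) ≠ ∞ :=
    ENNReal.rpow_ne_top_of_nonneg hp1.le (ENNReal.mul_ne_top hSf hA)
  have hup := (ENNReal.Tendsto.const_mul hlim (Or.inr hSA)).add hlimd
  rw [mul_zero, add_zero] at hup
  refine tendsto_of_tendsto_of_tendsto_of_le_of_le tendsto_const_nhds hup (fun _ => zero_le) ?_
  intro k
  simp only
  obtain ⟨Ck, hCk⟩ := bes_trig_bdd (hP k)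
  obtain ⟨D, hD, hest⟩ := hcore (fun s => f s - P k s) (hfmeas.sub (hPm k)) (C + Ck)
    (fun t => (norm_sub_le _ _).trans (add_le_add (hC t) (hCk t)))
  rw [← ENNReal.limsup_const_mul_of_ne_top hSA,
    ← limsup_add_const atTop _ _ (by isBoundedDefault) (by isBoundedDefault)]
  refine limsup_le_limsup ?_ (by isBoundedDefault) (by isBoundedDefault)
  have hbig : ∀ᶠ t : ℝ in atTop, S * D ≤ ENNReal.ofReal t * d k := by
    have h1 : Tendsto (fun t : ℝ => ENNReal.ofReal t * d k) atTop (𝓝 (∞ * d k)) :=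
      ENNReal.Tendsto.mul_const ENNReal.tendsto_ofReal_atTop (Or.inl (by simp))
    rw [ENNReal.top_mul (hd0 k)] at h1
    exact (h1.eventually (lt_mem_nhds (ENNReal.mul_ne_top hSf hD).lt_top)).mono fun _ h => h.le
  filter_upwards [hbig, eventually_ge_atTop 1] with t htD ht
  refine bes_lim a p hp hap A S D (d k) _ t ht _ ?_ htD
  have hpt : ∀ s, ENNReal.ofReal (‖(∫ r, Γ s r (f r)) - Q k s‖ ^ q) ≤
      S * (‖∫ r, Γ s r (f r - P k r)‖ₑ ^ q + e k ^ q) := by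
    intro s
    rw [hen]
    refine le_trans (ENNReal.rpow_le_rpow ?_ hq0.le)
      (ENNReal.rpow_add_le_mul_rpow_add_rpow _ _ hαp)
    have h1 : ∫ r, Γ s r (f r - P k r) = (∫ r, Γ s r (f r)) - ∫ r, Γ s r (P k r) := by
      simp only [map_sub]
      exact integral_sub (bes_int Γ hΓcont M ω hM hω hΓ f hfmeas C hC s)
        (bes_int Γ hΓcont M ω hM hω hΓ _ (hPm k) Ck hCk s)
    rw [h1]
    calc _ = ‖((∫ r, Γ s r (f r)) - ∫ r, Γ s r (P k r)) + ((∫ r, Γ s r (P k r)) - Q k s)‖ₑ := by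
          congr 1; abel
      _ ≤ _ := by
        refine (enorm_add_le _ _).trans ?_
        gcongr
        rw [← ofReal_norm]
        exact ENNReal.ofReal_le_ofReal (hQb k s)
  refine (lintegral_mono hpt).trans ?_
  rw [lintegral_const_mul' _ _ hSf, lintegral_add_right _ measurable_const, setLIntegral_const,
    Real.volume_Icc]
  simp_rw [hen]
  refine (mul_le_mul_right (add_le_add_left (hest t) _) _).trans (le_of_eq ?_)
  have : ENNReal.ofReal (t - -t) = 2 * ENNReal.ofReal t := by
    rw [show t - -t = 2 * t by ring, ENNReal.ofReal_mul (by norm_num)]; simp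
  rw [this]
  simp only [hd]
  ring

end D3

/-- the mild solution `u(t) = ∫_ℝ Γ(t,s) f(s) ds` associated with an
exponentially decaying Green's function is bounded, continuous and belongs to
`e-(x^α,t^{−a})-B^p(ℝ : X)` whenever `f` does. -/
theorem besicovitch_stmt18 {X : Type*}
    [NormedAddCommGroup X] [NormedSpace ℂ X] [CompleteSpace X]
    (Γ : ℝ → ℝ → X →L[ℂ] X)
    (hΓcont : ∀ x : X, ContinuousOn (fun q : ℝ × ℝ => Γ q.1 q.2 x) {q | q.1 ≠ q.2})
    (M ω : ℝ) (hM : 0 < M) (hω : 0 < ω)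
    (hΓ : ∀ t s : ℝ, ‖Γ t s‖ ≤ M * Real.exp (-ω * |t - s|))
    (hBohr : ∀ P : ℝ → X, IsTrigPoly1 P →
      BohrAP1 (fun t : ℝ => ∫ s in Set.Iio t, Γ t s (P s)) ∧
      BohrAP1 (fun t : ℝ => ∫ s in Set.Ioi t, Γ t s (P s)))
    (a α p : ℝ) (ha : 0 < a) (hα : 0 < α) (hp : 1 ≤ p)
    (hαp : 1 ≤ α * p) (hap : 1 ≤ a * p)
    (f : ℝ → X) (hfmeas : StronglyMeasurable f)
    (hfbdd : ∃ C : ℝ, ∀ t : ℝ, ‖f t‖ ≤ C)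
    (hf : MemBes1 α a p f) :
    (∀ t : ℝ, Integrable (fun s : ℝ => Γ t s (f s))) ∧
    (∃ C : ℝ, ∀ t : ℝ, ‖∫ s : ℝ, Γ t s (f s)‖ ≤ C) ∧
    Continuous (fun t : ℝ => ∫ s : ℝ, Γ t s (f s)) ∧
    MemBes1 α a p (fun t : ℝ => ∫ s : ℝ, Γ t s (f s)) := by
  obtain ⟨C, hC⟩ := hfbdd
  exact ⟨bes_int Γ hΓcont M ω hM hω hΓ f hfmeas C hC,
    ⟨_, bes_bdd Γ M ω hM hω hΓ f C hC⟩,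
    bes_cont Γ hΓcont M ω hM hω hΓ f hfmeas C hC,
    bes_mem Γ hΓcont M ω hM hω hΓ hBohr a α p hp hαp hap f hfmeas C hC hf⟩
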